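/- (Area growth estimate) Let 0 < λ ≤ K(x) ≤ Λ be a measurable function on ℝ² and let u be a C² solution of Δu + K e^{2u} = 0 on ℝ² with u ≤ M everywhere. Then there exist ε, C > 0 depending only on (M, λ, Λ) such that ∫_{B_R} e^{2u} dx ≤ C R^{2-ε} for all R ≥ 1. -/

import Mathlib

open MeasureTheory

noncomputable def lap (f : EuclideanSpace ℝ (Fin 2) → ℝ) (x : EuclideanSpace ℝ (Fin 2)) : ℝ :=
  ∑ i : Fin 2, fderiv ℝ (fun y => fderiv ℝ f y (EuclideanSpace.single i 1)) x
    (EuclideanSpace.single i 1)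

/-!
Put `v = M - u ≥ 0` and `d = 2`. Then `Δ v = K e^{2u} ≥ 0` and, since `1 + t ≤ e^{2t}` for `t ≥ 0`,
`(1 + v) Δ v ≤ B := Λ e^{2M}`. The claim is that the mass of `Δ v` in a cube of side `r` is at most
`C r ^ (d - ε)`. Suppose this holds up to scale `r / 2` and subdivide a cube of side `r` into a
fixed number of tiles. If the tile at the centre carries at least half of the mass it is allowed,
then weighted means of `v` about it grow so fast that `v ≳ C r ^ (2 - ε)` at some point of the cube;
as `v` is subharmonic and the growth bound limits the increase of its means, the same lower bound
holds on a ball of radius comparable to `r`. There `Δ v ≤ B / (1 + v)` is tiny once `C` is large.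
In either case some tile carries at most half of its allowed mass, and this saving makes up for the
loss `ε` in the exponent when passing from the scale of the tiles to `r`.
-/

open Filter Metric Module Set
open scoped Laplacian Topology

section LaplacianFormula

lemma contDiff_fderiv_apply_const {E F : Type*} [NormedAddCommGroup E] [NormedSpace ℝ E]
    [NormedAddCommGroup F] [NormedSpace ℝ F] {v : E → F} (hv : ContDiff ℝ 2 v) (e : E) :
    ContDiff ℝ 1 fun y ↦ fderiv ℝ v y e :=
  (hv.fderiv_right one_add_one_eq_two.le).clm_apply contDiff_const

lemma hasFDerivAt_comp_add_smul {E F : Type*} [NormedAddCommGroup E] [NormedSpace ℝ E]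
    [NormedAddCommGroup F] [NormedSpace ℝ F] {g : E → F} {g' : E →L[ℝ] F} {x y : E} {r : ℝ}
    (hg : HasFDerivAt g g' (x + r • y)) : HasFDerivAt (fun y ↦ g (x + r • y)) (r • g') y := by
  have haffine : HasFDerivAt (fun y : E ↦ x + r • y) (r • ContinuousLinearMap.id ℝ E) y :=
    ((hasFDerivAt_id y).const_smul r).const_add x
  refine (hg.comp y haffine).congr_fderiv ?_
  ext z
  simp

variable {E ι : Type*} [NormedAddCommGroup E] [InnerProductSpace ℝ E] [FiniteDimensional ℝ E]
  [Fintype ι] {v : E → ℝ}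

lemma laplacian_eq_sum_fderiv_fderiv_apply (hv : ContDiff ℝ 2 v) (b : OrthonormalBasis ι ℝ E)
    (x : E) : Δ v x = ∑ i, fderiv ℝ (fun y ↦ fderiv ℝ v y (b i)) x (b i) := by
  have hdiff : DifferentiableAt ℝ (fderiv ℝ v) x :=
    (hv.fderiv_right (m := 1) one_add_one_eq_two.le).differentiable one_ne_zero x
  simp [InnerProductSpace.laplacian_eq_iteratedFDeriv_orthonormalBasis v b,
    iteratedFDeriv_two_apply, fderiv_clm_apply hdiff (differentiableAt_const _)]

lemma continuous_laplacian (hv : ContDiff ℝ 2 v) : Continuous (Δ v) := by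
  rw [funext (laplacian_eq_sum_fderiv_fderiv_apply hv (stdOrthonormalBasis ℝ E))]
  exact continuous_finsetSum _ fun i _ ↦
    ((contDiff_fderiv_apply_const hv _).continuous_fderiv one_ne_zero).clm_apply continuous_const

end LaplacianFormula

section Bump

variable {E : Type*} [NormedAddCommGroup E] {n : ℕ} {x y : E}

/-- The truncated paraboloid `(1 - ‖y‖²)₊ ^ n`, a radial averaging kernel on the unit ball. Its
gradient is `-2 n y` times the kernel of exponent `n - 1`, so that differentiating a weighted mean
in the radius gives a weighted mean of the Laplacian. -/
noncomputable def quadBump (n : ℕ) (y : E) : ℝ := max (1 - ‖y‖ ^ 2) 0 ^ n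

lemma quadBump_nonneg (n : ℕ) (y : E) : 0 ≤ quadBump n y := pow_nonneg (le_max_right _ _) n

lemma quadBump_le_one (n : ℕ) (y : E) : quadBump n y ≤ 1 :=
  pow_le_one₀ (le_max_right _ _) (max_le (sub_le_self 1 (sq_nonneg _)) zero_le_one)

lemma quadBump_zero_right (n : ℕ) : quadBump n (0 : E) = 1 := by simp [quadBump]

lemma quadBump_of_one_le_norm (hn : n ≠ 0) (hy : 1 ≤ ‖y‖) : quadBump n y = 0 := by
  rw [quadBump, max_eq_right (sub_nonpos.2 (one_le_pow₀ hy)), zero_pow hn]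

lemma three_quarters_pow_le_quadBump (hy : ‖y‖ ≤ 1 / 2) : (3 / 4) ^ n ≤ quadBump n y := by
  refine pow_le_pow_left₀ (by norm_num) (le_max_of_le_left ?_) n
  nlinarith [norm_nonneg y]

@[fun_prop]
lemma continuous_quadBump (n : ℕ) : Continuous (quadBump n : E → ℝ) := by
  unfold quadBump
  fun_prop

lemma hasDerivAt_max_zero_pow (hn : n ≠ 0) (t : ℝ) :
    HasDerivAt (fun t : ℝ ↦ max t 0 ^ (n + 1)) ((n + 1) * max t 0 ^ n) t := by
  refine hasDerivAt_of_hasDerivAt_of_ne' (x := 0) (g := fun t ↦ (n + 1) * max t 0 ^ n)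
    (fun s hs ↦ ?_) (by fun_prop) (by fun_prop) t
  rcases hs.lt_or_gt with hs | hs
  · have hzero : (fun t : ℝ ↦ max t 0 ^ (n + 1)) =ᶠ[𝓝 s] fun _ ↦ 0 := by
      filter_upwards [gt_mem_nhds hs] with t ht
      rw [max_eq_right ht.le, zero_pow n.succ_ne_zero]
    simpa [max_eq_right hs.le, hn] using (hasDerivAt_const s (0 : ℝ)).congr_of_eventuallyEq hzero
  · have hpow : (fun t : ℝ ↦ max t 0 ^ (n + 1)) =ᶠ[𝓝 s] fun t ↦ t ^ (n + 1) := by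
      filter_upwards [lt_mem_nhds hs] with t ht
      rw [max_eq_left ht.le]
    simpa [max_eq_left hs.le] using (hasDerivAt_pow (n + 1) s).congr_of_eventuallyEq hpow

lemma hasFDerivAt_quadBump_succ [InnerProductSpace ℝ E] (hn : n ≠ 0) (y : E) :
    HasFDerivAt (quadBump (n + 1)) (-(2 * (n + 1) * quadBump n y) • innerSL ℝ y) y := by
  have hinner : HasFDerivAt (fun y : E ↦ 1 - ‖y‖ ^ 2) (-(2 • innerSL ℝ y)) y :=
    (hasStrictFDerivAt_norm_sq y).hasFDerivAt.const_sub 1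
  refine ((hasDerivAt_max_zero_pow hn _).comp_hasFDerivAt y hinner).congr_fderiv ?_
  ext z
  simp [quadBump]
  ring

lemma norm_inv_smul_sub [NormedSpace ℝ E] {r : ℝ} (hr : 0 < r) (x y : E) :
    ‖r⁻¹ • (y - x)‖ = dist y x / r := by
  rw [norm_smul_of_nonneg (inv_nonneg.2 hr.le), inv_mul_eq_div, dist_eq_norm]

lemma hasCompactSupport_quadBump [NormedSpace ℝ E] [FiniteDimensional ℝ E] (hn : n ≠ 0) :
    HasCompactSupport (quadBump n : E → ℝ) := by
  have := FiniteDimensional.proper_real E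
  refine HasCompactSupport.of_support_subset_isCompact (isCompact_closedBall 0 1) fun y hy ↦ ?_
  by_contra h
  rw [mem_closedBall_zero_iff, not_le] at h
  exact hy (quadBump_of_one_le_norm hn h.le)

end Bump

section BumpMean

variable {E : Type*} [NormedAddCommGroup E] [InnerProductSpace ℝ E] [FiniteDimensional ℝ E]
  [MeasurableSpace E] [BorelSpace E] {n : ℕ} {f g v : E → ℝ} {x y : E} {r : ℝ}

/-- The unnormalised average of `f` over the ball of centre `x` and radius `r`, weighted by the
rescaled kernel `quadBump n`. -/
noncomputable def bumpMean (n : ℕ) (f : E → ℝ) (x : E) (r : ℝ) : ℝ :=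
  ∫ y, quadBump n y * f (x + r • y)

lemma integrable_quadBump_mul (hn : n ≠ 0) (hg : Continuous g) :
    Integrable fun y ↦ quadBump n y * g y :=
  ((continuous_quadBump n).mul hg).integrable_of_hasCompactSupport
    (hasCompactSupport_quadBump hn).mul_right

lemma integral_quadBump_pos (hn : n ≠ 0) : 0 < ∫ y : E, quadBump n y :=
  (continuous_quadBump n).integral_pos_of_hasCompactSupport_nonneg_nonzero
    (hasCompactSupport_quadBump hn) (quadBump_nonneg n) (x := 0) (by simp [quadBump_zero_right])

lemma bumpMean_zero_right (n : ℕ) (f : E → ℝ) (x : E) :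
    bumpMean n f x 0 = (∫ y : E, quadBump n y) * f x := by
  simp [bumpMean, integral_mul_const]

lemma bumpMean_nonneg (hf : ∀ y, 0 ≤ f y) (n : ℕ) (x : E) (r : ℝ) : 0 ≤ bumpMean n f x r :=
  integral_nonneg fun y ↦ mul_nonneg (quadBump_nonneg n y) (hf _)

lemma integral_quadBump_mul_inner_mul (hn : n ≠ 0) (hg : ContDiff ℝ 1 g) (x e : E) (r : ℝ) :
    2 * (n + 1) * ∫ y, quadBump n y * (inner ℝ y e * g (x + r • y)) =
      r * ∫ y, quadBump (n + 1) y * fderiv ℝ g (x + r • y) e := by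
  have hg_cont := hg.continuous
  have hg' : Continuous fun y ↦ fderiv ℝ g (x + r • y) e :=
    ((hg.continuous_fderiv one_ne_zero).comp (by fun_prop)).clm_apply continuous_const
  have hg_deriv (y : E) :=
    hasFDerivAt_comp_add_smul ((hg.differentiable one_ne_zero) (x + r • y)).hasFDerivAt
  have hbump (y : E) : fderiv ℝ (quadBump (n + 1)) y e * g (x + r • y) =
      -(2 * (n + 1)) * (quadBump n y * (inner ℝ y e * g (x + r • y))) := by
    simp [(hasFDerivAt_quadBump_succ hn y).fderiv]
    ring
  have hcomp (y : E) : quadBump (n + 1) y * fderiv ℝ (fun y ↦ g (x + r • y)) y e =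
      r * (quadBump (n + 1) y * fderiv ℝ g (x + r • y) e) := by
    simp [(hg_deriv y).fderiv]
    ring
  have hparts := integral_mul_fderiv_eq_neg_fderiv_mul_of_integrable (μ := volume)
    (f := quadBump (n + 1)) (g := fun y ↦ g (x + r • y)) (v := e)
    (by simpa only [hbump] using (integrable_quadBump_mul hn (by fun_prop)).const_mul _)
    (by simpa only [hcomp] using (integrable_quadBump_mul n.succ_ne_zero hg').const_mul r)
    (integrable_quadBump_mul n.succ_ne_zero (by fun_prop))
    (fun y _ ↦ (hasFDerivAt_quadBump_succ hn y).differentiableAt)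
    (fun y _ ↦ (hg_deriv y).differentiableAt)
  simp only [hbump, hcomp, integral_const_mul] at hparts
  linarith

lemma integral_quadBump_mul_fderiv (hn : n ≠ 0) (hv : ContDiff ℝ 2 v) (x : E) (r : ℝ) :
    ∫ y, quadBump n y * fderiv ℝ v (x + r • y) y =
      r / (2 * (n + 1)) * bumpMean (n + 1) (Δ v) x r := by
  let b := stdOrthonormalBasis ℝ E
  have hpartial (i) : ContDiff ℝ 1 fun y ↦ fderiv ℝ v y (b i) := contDiff_fderiv_apply_const hv _
  have hpartial_cont (i) : Continuous fun y ↦ fderiv ℝ v (x + r • y) (b i) :=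
    (hpartial i).continuous.comp (by fun_prop)
  have hradial (y : E) : quadBump n y * fderiv ℝ v (x + r • y) y =
      ∑ i, quadBump n y * (inner ℝ y (b i) * fderiv ℝ v (x + r • y) (b i)) := by
    conv_lhs => enter [2, 2]; rw [← b.sum_repr' y]
    simp only [map_sum, map_smul, smul_eq_mul, Finset.mul_sum, real_inner_comm]
  have hlap (y : E) : quadBump (n + 1) y * Δ v (x + r • y) =
      ∑ i, quadBump (n + 1) y * fderiv ℝ (fun y ↦ fderiv ℝ v y (b i)) (x + r • y) (b i) := by
    rw [laplacian_eq_sum_fderiv_fderiv_apply hv b, Finset.mul_sum]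
  simp only [bumpMean, hradial, hlap]
  rw [integral_finsetSum, integral_finsetSum, Finset.mul_sum]
  · refine Finset.sum_congr rfl fun i _ ↦ ?_
    rw [div_mul_eq_mul_div, eq_div_iff (by positivity), mul_comm]
    exact integral_quadBump_mul_inner_mul hn (hpartial i) x (b i) r
  · exact fun i _ ↦ integrable_quadBump_mul n.succ_ne_zero <|
      (((hpartial i).continuous_fderiv one_ne_zero).comp (by fun_prop)).clm_apply continuous_const
  · exact fun i _ ↦ integrable_quadBump_mul hn (by fun_prop)

theorem hasDerivAt_bumpMean (hn : n ≠ 0) (hv : ContDiff ℝ 2 v) (x : E) (r : ℝ) :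
    HasDerivAt (bumpMean n v x) (r / (2 * (n + 1)) * bumpMean (n + 1) (Δ v) x r) r := by
  rw [← integral_quadBump_mul_fderiv hn hv]
  have hv_cont := hv.continuous
  have hv'_cont : Continuous (fderiv ℝ v) := hv.continuous_fderiv two_ne_zero
  let F' (s : ℝ) (y : E) : ℝ := quadBump n y * fderiv ℝ v (x + s • y) y
  have hF' : Continuous F'.uncurry := by unfold F'; fun_prop
  have hF'_zero {s y} (hy : y ∉ closedBall (0 : E) 1) : F' s y = 0 := by
    rw [mem_closedBall_zero_iff, not_le] at hy
    simp only [F', quadBump_of_one_le_norm hn hy.le, zero_mul]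
  obtain ⟨B, hB⟩ := ((isCompact_closedBall r 1).prod
    (isCompact_closedBall (0 : E) 1)).exists_bound_of_continuousOn hF'.continuousOn
  refine (hasDerivAt_integral_of_dominated_loc_of_deriv_le (s := ball r 1)
    (bound := (closedBall (0 : E) 1).indicator fun _ ↦ B)
    (F := fun s y ↦ quadBump n y * v (x + s • y)) (F' := F')
    (ball_mem_nhds _ one_pos) (.of_forall fun s ↦ ?_) (integrable_quadBump_mul hn (by fun_prop))
    (by fun_prop) (.of_forall fun y s hs ↦ ?_) ?_ (.of_forall fun y s _ ↦ ?_)).2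
  · exact Continuous.aestronglyMeasurable (by fun_prop)
  · by_cases hy : y ∈ closedBall (0 : E) 1
    · rw [indicator_of_mem hy]
      exact hB (s, y) ⟨ball_subset_closedBall hs, hy⟩
    · rw [indicator_of_notMem hy, hF'_zero hy, norm_zero]
  · exact (integrable_indicator_iff measurableSet_closedBall).2
      (integrableOn_const (isCompact_closedBall _ _).measure_lt_top.ne)
  · have hline : HasDerivAt (fun s : ℝ ↦ x + s • y) y s := by
      simpa using ((hasDerivAt_id s).smul_const y).const_add x
    exact ((hv.differentiable two_ne_zero (x + s • y)).hasFDerivAt.comp_hasDerivAt s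
      hline).const_mul _

lemma integrable_quadBump_comp_mul (hn : n ≠ 0) (hg : Continuous g) (x : E) (hr : 0 < r) :
    Integrable fun q ↦ quadBump n (r⁻¹ • (q - x)) * g q := by
  have h := ((integrable_quadBump_mul hn (g := fun y ↦ g (x + r • y))
    (by fun_prop)).comp_smul (inv_ne_zero hr.ne')).comp_sub_right x
  simpa [smul_smul, hr.ne'] using h

lemma pow_finrank_mul_bumpMean (n : ℕ) (f : E → ℝ) (x : E) (hr : 0 < r) :
    r ^ finrank ℝ E * bumpMean n f x r = ∫ q, quadBump n (r⁻¹ • (q - x)) * f q := by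
  have hscale := Measure.integral_comp_inv_smul_of_nonneg (μ := volume)
    (fun y ↦ quadBump n y * f (x + r • y)) hr.le
  rw [← smul_eq_mul, bumpMean, ← hscale, ← integral_sub_right_eq_self _ x]
  simp [smul_smul, hr.ne']

lemma pow_finrank_mul_bumpMean_le_setIntegral (hn : n ≠ 0) (hf : Continuous f) (hf0 : ∀ y, 0 ≤ f y)
    (hr : 0 < r) {s : Set E} (hs : MeasurableSet s) (hfs : IntegrableOn f s) (hxs : ball x r ⊆ s) :
    r ^ finrank ℝ E * bumpMean n f x r ≤ ∫ q in s, f q := by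
  rw [pow_finrank_mul_bumpMean n f x hr, ← integral_indicator hs]
  refine integral_mono (integrable_quadBump_comp_mul hn hf x hr)
    ((integrable_indicator_iff hs).2 hfs) fun q ↦ ?_
  by_cases hq : q ∈ ball x r
  · rw [indicator_of_mem (hxs hq)]
    exact mul_le_of_le_one_left (hf0 q) (quadBump_le_one n _)
  · have hq' : 1 ≤ ‖r⁻¹ • (q - x)‖ := by
      rwa [norm_inv_smul_sub hr, one_le_div hr, ← not_lt]
    simpa only [quadBump_of_one_le_norm hn hq', zero_mul] using indicator_nonneg (fun y _ ↦ hf0 y) q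

lemma mul_setIntegral_le_pow_finrank_mul_bumpMean (hn : n ≠ 0) (hf : Continuous f)
    (hf0 : ∀ y, 0 ≤ f y) (hr : 0 < r) {s : Set E} (hs : MeasurableSet s)
    (hsx : s ⊆ closedBall x (r / 2)) :
    (3 / 4) ^ n * ∫ q in s, f q ≤ r ^ finrank ℝ E * bumpMean n f x r := by
  have hfs : IntegrableOn f s :=
    (hf.continuousOn.integrableOn_compact (isCompact_closedBall x (r / 2))).mono_set hsx
  rw [pow_finrank_mul_bumpMean n f x hr, ← integral_indicator hs, ← integral_const_mul]
  refine integral_mono (((integrable_indicator_iff hs).2 hfs).const_mul _)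
    (integrable_quadBump_comp_mul hn hf x hr) fun q ↦ ?_
  by_cases hq : q ∈ s
  · have hq' : ‖r⁻¹ • (q - x)‖ ≤ 1 / 2 := by
      rw [norm_inv_smul_sub hr, div_le_iff₀ hr]
      linarith [mem_closedBall.1 (hsx hq)]
    simp only [indicator_of_mem hq]
    exact mul_le_mul_of_nonneg_right (three_quarters_pow_le_quadBump hq') (hf0 q)
  · simpa only [indicator_of_notMem hq, mul_zero] using mul_nonneg (quadBump_nonneg n _) (hf0 q)

lemma bumpMean_le_of_dist_le (hn : n ≠ 0) (hf : Continuous f) (hf0 : ∀ y, 0 ≤ f y) (hr : 0 < r)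
    (hxy : dist x y ≤ r) :
    (3 / 4) ^ n * bumpMean n f x r ≤ 4 ^ finrank ℝ E * bumpMean n f y (4 * r) := by
  have hball : ball x r ⊆ closedBall y (4 * r / 2) := fun q hq ↦
    mem_closedBall.2 (by linarith [dist_triangle q x y, mem_ball.1 hq])
  have hfx : IntegrableOn f (ball x r) :=
    (hf.continuousOn.integrableOn_compact (isCompact_closedBall x r)).mono_set
      ball_subset_closedBall
  refine le_of_mul_le_mul_left ?_ (pow_pos hr (finrank ℝ E))
  calc r ^ finrank ℝ E * ((3 / 4) ^ n * bumpMean n f x r)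
      = (3 / 4) ^ n * (r ^ finrank ℝ E * bumpMean n f x r) := by ring
    _ ≤ (3 / 4) ^ n * ∫ q in ball x r, f q := by
        gcongr
        exact pow_finrank_mul_bumpMean_le_setIntegral hn hf hf0 hr measurableSet_ball hfx subset_rfl
    _ ≤ (4 * r) ^ finrank ℝ E * bumpMean n f y (4 * r) :=
        mul_setIntegral_le_pow_finrank_mul_bumpMean hn hf hf0 (by positivity) measurableSet_ball
          hball
    _ = r ^ finrank ℝ E * (4 ^ finrank ℝ E * bumpMean n f y (4 * r)) := by ring

lemma exists_mem_ball_bumpMean_le (hn : n ≠ 0) (hf : Continuous f) (x : E) (hr : 0 < r) :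
    ∃ y ∈ ball x r, bumpMean n f x r ≤ (∫ y : E, quadBump n y) * f y := by
  by_contra! hlt
  set W := ∫ y : E, quadBump n y
  set m := bumpMean n f x r with hm
  have hW : 0 < W := integral_quadBump_pos hn
  have hgap {y : E} (hy : ‖y‖ < 1) : 0 < m / W - f (x + r • y) := by
    have hmem : x + r • y ∈ ball x r := by
      simpa [mem_ball_iff_norm, norm_smul_of_nonneg hr.le] using mul_lt_of_lt_one_right hr hy
    rw [sub_pos, lt_div_iff₀' hW]
    exact hlt _ hmem
  have hpos : 0 < ∫ y : E, quadBump n y * (m / W - f (x + r • y)) := by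
    refine Continuous.integral_pos_of_hasCompactSupport_nonneg_nonzero
      ((continuous_quadBump n).mul (by fun_prop)) (hasCompactSupport_quadBump hn).mul_right
      (fun y ↦ ?_) (x := 0) ?_
    · rcases lt_or_ge ‖y‖ 1 with hy | hy
      · exact mul_nonneg (quadBump_nonneg n y) (hgap hy).le
      · simp [quadBump_of_one_le_norm hn hy]
    · simpa only [quadBump_zero_right, one_mul] using (hgap (by simp)).ne'
  have hzero : ∫ y : E, quadBump n y * (m / W - f (x + r • y)) = 0 := by
    simp only [mul_sub]
    rw [integral_sub (integrable_quadBump_mul hn continuous_const)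
      (integrable_quadBump_mul hn (by fun_prop)), integral_mul_const, ← bumpMean, ← hm,
      mul_div_cancel₀ m hW.ne', sub_self]
  exact hpos.ne' hzero

section Subharmonic

variable (hv : ContDiff ℝ 2 v) (hv_lap : ∀ y, 0 ≤ Δ v y)
include hv hv_lap

lemma mul_le_bumpMean_of_laplacian_nonneg (hn : n ≠ 0) (x : E) (hr : 0 ≤ r) :
    (∫ y : E, quadBump n y) * v x ≤ bumpMean n v x r := by
  have hmono : MonotoneOn (bumpMean n v x) (Icc 0 r) := by
    refine monotoneOn_of_deriv_nonneg (convex_Icc 0 r)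
      (fun ρ _ ↦ (hasDerivAt_bumpMean hn hv x ρ).continuousAt.continuousWithinAt)
      (fun ρ _ ↦ (hasDerivAt_bumpMean hn hv x ρ).differentiableAt.differentiableWithinAt)
      fun ρ hρ ↦ ?_
    rw [interior_Icc] at hρ
    rw [(hasDerivAt_bumpMean hn hv x ρ).deriv]
    exact mul_nonneg (div_nonneg hρ.1.le (by positivity)) (bumpMean_nonneg hv_lap _ x ρ)
  rw [← bumpMean_zero_right]
  exact hmono ⟨le_rfl, hr⟩ ⟨hr, le_rfl⟩ hr

lemma sq_mul_setIntegral_laplacian_le_bumpMean (hv0 : ∀ y, 0 ≤ v y) (hr : 0 < r) {s : Set E}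
    (hs : MeasurableSet s) (hsx : s ⊆ closedBall x (r / 4)) :
    9 / 256 * (r ^ 2 * ∫ q in s, Δ v q) ≤ r ^ finrank ℝ E * bumpMean 1 v x r := by
  set D := r ^ finrank ℝ E
  set m := ∫ q in s, Δ v q
  have hD : 0 < D := pow_pos hr _
  have hm : 0 ≤ m := setIntegral_nonneg hs fun y _ ↦ hv_lap y
  have hderiv (ρ : ℝ) (hρ : ρ ∈ interior (Icc (r / 2) r)) :
      9 / 128 * r * m / D ≤ deriv (bumpMean 1 v x) ρ := by
    rw [interior_Icc] at hρ
    have hρ0 : 0 < ρ := (half_pos hr).trans hρ.1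
    have hmass := mul_setIntegral_le_pow_finrank_mul_bumpMean two_ne_zero (continuous_laplacian hv)
      hv_lap hρ0 hs (hsx.trans (closedBall_subset_closedBall (by linarith [hρ.1])))
    have hpow : ρ ^ finrank ℝ E ≤ D := pow_le_pow_left₀ hρ0.le hρ.2.le _
    have hmean := bumpMean_nonneg hv_lap 2 x ρ
    have hmass' : 9 / 16 * m ≤ D * bumpMean 2 (Δ v) x ρ := by nlinarith
    rw [(hasDerivAt_bumpMean one_ne_zero hv x ρ).deriv, div_le_iff₀ hD]
    calc 9 / 128 * r * m = r / 8 * (9 / 16 * m) := by ring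
      _ ≤ ρ / 4 * (D * bumpMean 2 (Δ v) x ρ) := by gcongr ?_ * ?_; linarith [hρ.1]
      _ = _ := by norm_num; ring
  have hgrow := (convex_Icc (r / 2) r).mul_sub_le_image_sub_of_le_deriv
    (fun ρ _ ↦ (hasDerivAt_bumpMean one_ne_zero hv x ρ).continuousAt.continuousWithinAt)
    (fun ρ _ ↦ (hasDerivAt_bumpMean one_ne_zero hv x ρ).differentiableAt.differentiableWithinAt)
    hderiv (r / 2) ⟨le_rfl, half_le_self hr.le⟩ r ⟨half_le_self hr.le, le_rfl⟩ (half_le_self hr.le)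
  calc 9 / 256 * (r ^ 2 * m) = D * (9 / 128 * r * m / D * (r - r / 2)) := by field_simp; ring
    _ ≤ D * bumpMean 1 v x r := by
      gcongr
      linarith [bumpMean_nonneg hv0 1 x (r / 2)]

end Subharmonic

end BumpMean

lemma setIntegral_le_sum_of_subset_iUnion {X κ : Type*} [MeasurableSpace X] {μ : Measure X}
    [Fintype κ] {f : X → ℝ} {t : Set X} {s : κ → Set X} (hf0 : ∀ y, 0 ≤ f y)
    (hfs : ∀ k, IntegrableOn f (s k) μ) (hts : t ⊆ ⋃ k, s k) :
    ∫ y in t, f y ∂μ ≤ ∑ k, ∫ y in s k, f y ∂μ := by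
  have hle : μ.restrict t ≤ ∑ k, μ.restrict (s k) := by
    rw [← Measure.sum_fintype]
    exact (Measure.restrict_mono_set μ hts).trans Measure.restrict_iUnion_le
  rw [← integral_finsetSum_measure fun k _ ↦ hfs k]
  exact integral_mono_measure hle (.of_forall hf0) (integrable_finsetSum_measure.2 fun k _ ↦ hfs k)

section Cube

variable {ι : Type*} {f : EuclideanSpace ℝ ι → ℝ} {x y z : EuclideanSpace ℝ ι}
  {r l b C ε : ℝ} {n : ℕ}

/-- The half-open cube with lower corner `x` and side `r`; half-open cubes tile exactly. -/
def cube (x : EuclideanSpace ℝ ι) (r : ℝ) : Set (EuclideanSpace ℝ ι) :=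
  {y | ∀ i, y i ∈ Ico (x i) (x i + r)}

lemma cube_eq_preimage (x : EuclideanSpace ℝ ι) (r : ℝ) :
    cube x r = WithLp.ofLp ⁻¹' univ.pi fun i ↦ Ico (x i) (x i + r) := by
  ext y
  simp [cube]

lemma measurableSet_cube [Countable ι] (x : EuclideanSpace ℝ ι) (r : ℝ) :
    MeasurableSet (cube x r) := by
  rw [cube_eq_preimage]
  exact WithLp.measurable_ofLp _ _ (.univ_pi fun _ ↦ measurableSet_Ico)

/-- The lower corner of the tile with index `p` in the tiling of `cube x (n * l)` by `n ^ d` cubes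
of side `l`. -/
noncomputable def tileCorner (x : EuclideanSpace ℝ ι) (l : ℝ) (p : ι → Fin n) :
    EuclideanSpace ℝ ι :=
  WithLp.toLp 2 fun i ↦ x i + l * (p i : ℕ)

lemma exists_mem_tile (hl : 0 < l) (hy : y ∈ cube x (n * l)) :
    ∃ p : ι → Fin n, y ∈ cube (tileCorner x l p) l := by
  have hcoord (i : ι) : ∃ k : Fin n, x i + l * (k : ℕ) ≤ y i ∧ y i < x i + l * (k : ℕ) + l := by
    obtain ⟨hlo, hhi⟩ := hy i
    have h0 : 0 ≤ (y i - x i) / l := div_nonneg (sub_nonneg.2 hlo) hl.le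
    have hfloor : ⌊(y i - x i) / l⌋₊ < n := by
      rw [Nat.floor_lt h0, div_lt_iff₀ hl]
      linarith
    have hle := (le_div_iff₀ hl).1 (Nat.floor_le h0)
    have hlt := (div_lt_iff₀ hl).1 (Nat.lt_floor_add_one ((y i - x i) / l))
    exact ⟨⟨_, hfloor⟩, by linarith, by linarith⟩
  choose p hp using hcoord
  exact ⟨p, hp⟩

lemma exists_tileCorner_eq_center (x : EuclideanSpace ℝ ι) (r : ℝ) (hn : n ≠ 0) :
    ∃ p : ι → Fin (2 * n),
      tileCorner x (r / (2 * n : ℕ)) p = WithLp.toLp 2 fun i ↦ x i + r / 2 := by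
  refine ⟨fun _ ↦ ⟨n, by omega⟩, PiLp.ext fun i ↦ ?_⟩
  simp only [tileCorner, Nat.cast_mul, Nat.cast_ofNat]
  field_simp

variable [Fintype ι]

lemma volume_cube (x : EuclideanSpace ℝ ι) (r : ℝ) :
    volume (cube x r) = ENNReal.ofReal r ^ Fintype.card ι := by
  rw [cube_eq_preimage, (PiLp.volume_preserving_ofLp ι).measure_preimage
    (MeasurableSet.univ_pi fun _ ↦ measurableSet_Ico).nullMeasurableSet, Real.volume_pi_Ico]
  simp

lemma dist_le_of_mem_cube (hy : y ∈ cube x r) (hz : z ∈ cube x r) :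
    dist y z ≤ Fintype.card ι * r := by
  have hcoord (i : ι) : ‖(y - z) i‖ ≤ r := by
    rw [PiLp.sub_apply, Real.norm_eq_abs, abs_sub_le_iff]
    constructor <;> linarith [(hy i).1, (hy i).2, (hz i).1, (hz i).2]
  have hsum : y - z = ∑ i, (y - z) i • EuclideanSpace.basisFun ι ℝ i := by
    simpa using ((EuclideanSpace.basisFun ι ℝ).sum_repr (y - z)).symm
  rw [dist_eq_norm, hsum]
  refine (norm_sum_le _ _).trans ?_
  simpa [norm_smul] using Finset.sum_le_card_nsmul Finset.univ (fun i ↦ ‖(y - z) i‖) r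
    fun i _ ↦ hcoord i

lemma cube_subset_closedBall (x : EuclideanSpace ℝ ι) (r : ℝ) :
    cube x r ⊆ closedBall x (Fintype.card ι * r) := fun _ hy ↦
  dist_le_of_mem_cube hy fun i ↦ ⟨le_rfl, (hy i).1.trans_lt (hy i).2⟩

lemma ball_subset_cube (h : ∀ i, y i = x i + r) : ball y r ⊆ cube x (2 * r) := by
  intro q hq i
  have hqi : |q i - y i| < r := (PiLp.norm_apply_le (q - y) i).trans_lt (mem_ball_iff_norm.1 hq)
  rw [abs_lt, h i] at hqi
  constructor <;> linarith

lemma integrableOn_cube (hf : Continuous f) (x : EuclideanSpace ℝ ι) (r : ℝ) :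
    IntegrableOn f (cube x r) :=
  (hf.continuousOn.integrableOn_compact (isCompact_closedBall _ _)).mono_set
    (cube_subset_closedBall x r)

lemma setIntegral_cube_le (hf : Continuous f) (hr : 0 ≤ r) (h : ∀ y ∈ cube x r, f y ≤ b) :
    ∫ y in cube x r, f y ≤ b * r ^ Fintype.card ι := by
  calc ∫ y in cube x r, f y ≤ ∫ _ in cube x r, b :=
        setIntegral_mono_on (integrableOn_cube hf x r) (integrableOn_cube continuous_const x r)
          (measurableSet_cube x r) h
    _ = b * r ^ Fintype.card ι := by
        simp [measureReal_def, volume_cube, ENNReal.toReal_ofReal hr, mul_comm]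

lemma setIntegral_cube_le_of_tile_le (hf : Continuous f) (hf0 : ∀ y, 0 ≤ f y)
    (x : EuclideanSpace ℝ ι) (hl : 0 < l) (hb : ∀ z, ∫ y in cube z l, f y ≤ b) (p : ι → Fin n)
    (hp : ∫ y in cube (tileCorner x l p) l, f y ≤ b / 2) :
    ∫ y in cube x (n * l), f y ≤ ((n : ℝ) ^ Fintype.card ι - 1 / 2) * b := by
  classical
  have hothers := Finset.sum_le_card_nsmul (Finset.univ.erase p)
    (fun q ↦ ∫ y in cube (tileCorner x l q) l, f y) b fun q _ ↦ hb _
  have hcard : ((Finset.univ.erase p).card : ℝ) = (n : ℝ) ^ Fintype.card ι - 1 := by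
    rw [Finset.cast_card_erase_of_mem (Finset.mem_univ p), Finset.card_univ]
    simp
  rw [nsmul_eq_mul, hcard] at hothers
  calc ∫ y in cube x (n * l), f y
      ≤ ∑ q : ι → Fin n, ∫ y in cube (tileCorner x l q) l, f y :=
        setIntegral_le_sum_of_subset_iUnion hf0 (fun q ↦ integrableOn_cube hf _ _)
          fun y hy ↦ mem_iUnion.2 (exists_mem_tile hl hy)
    _ = (∫ y in cube (tileCorner x l p) l, f y) +
        ∑ q ∈ Finset.univ.erase p, ∫ y in cube (tileCorner x l q) l, f y :=
        (Finset.add_sum_erase _ _ (Finset.mem_univ p)).symm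
    _ ≤ ((n : ℝ) ^ Fintype.card ι - 1 / 2) * b := by linarith

/-- Power growth of the integral of `f` over cubes, at all scales up to `R`. -/
def HasCubeGrowth (f : EuclideanSpace ℝ ι → ℝ) (C α R : ℝ) : Prop :=
  ∀ x ρ, 0 < ρ → ρ ≤ R → ∫ y in cube x ρ, f y ≤ C * ρ ^ α

lemma HasCubeGrowth.mono {α R R' : ℝ} (h : HasCubeGrowth f C α R) (hR : R' ≤ R) :
    HasCubeGrowth f C α R' :=
  fun x ρ hρ0 hρ ↦ h x ρ hρ0 (hρ.trans hR)

lemma HasCubeGrowth.setIntegral_le_of_tile_le (hf : Continuous f) (hf0 : ∀ y, 0 ≤ f y)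
    (hn : n ≠ 0) (hC : 0 ≤ C) (hr : 0 < r)
    (hgrowth : HasCubeGrowth f C (Fintype.card ι - ε) (r / n))
    (hε : (n : ℝ) ^ ε * ((n : ℝ) ^ Fintype.card ι - 1 / 2) ≤ (n : ℝ) ^ Fintype.card ι)
    (x : EuclideanSpace ℝ ι) (p : ι → Fin n)
    (hp : ∫ y in cube (tileCorner x (r / n) p) (r / n), f y ≤
      C * (r / n) ^ (Fintype.card ι - ε) / 2) :
    ∫ y in cube x r, f y ≤ C * r ^ (Fintype.card ι - ε) := by
  have hn0 : (0 : ℝ) < n := by positivity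
  have hl : 0 < r / n := div_pos hr hn0
  have hscale : (r / n) ^ (Fintype.card ι - ε) =
      r ^ (Fintype.card ι - ε) * (n : ℝ) ^ ε / (n : ℝ) ^ Fintype.card ι := by
    rw [Real.div_rpow hr.le hn0.le, Real.rpow_sub hn0, Real.rpow_natCast, div_div_eq_mul_div]
  have htiles := setIntegral_cube_le_of_tile_le hf hf0 x hl
    (fun z ↦ hgrowth z _ hl le_rfl) p hp
  rw [mul_div_cancel₀ _ hn0.ne'] at htiles
  calc ∫ y in cube x r, f y
      ≤ ((n : ℝ) ^ Fintype.card ι - 1 / 2) * (C * (r / n) ^ (Fintype.card ι - ε)) := htiles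
    _ = C * r ^ (Fintype.card ι - ε) *
        ((n : ℝ) ^ ε * ((n : ℝ) ^ Fintype.card ι - 1 / 2) / (n : ℝ) ^ Fintype.card ι) := by
        rw [hscale]; ring
    _ ≤ C * r ^ (Fintype.card ι - ε) := by
        refine mul_le_of_le_one_right (by positivity) ?_
        exact div_le_one_of_le₀ hε (by positivity)

lemma hasCubeGrowth_one (hf : Continuous f) (hfC : ∀ y, f y ≤ C) (hC : 0 ≤ C) (hε : 0 ≤ ε) :
    HasCubeGrowth f C (Fintype.card ι - ε) 1 := fun x ρ hρ0 hρ ↦ by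
  refine (setIntegral_cube_le hf hρ0.le fun y _ ↦ hfC y).trans ?_
  rw [← Real.rpow_natCast]
  exact mul_le_mul_of_nonneg_left
    (Real.rpow_le_rpow_of_exponent_ge hρ0 hρ (sub_le_self _ hε)) hC

end Cube

section GrowthStep

variable {ι : Type*} [Fintype ι] {v f : EuclideanSpace ℝ ι → ℝ} {x y z : EuclideanSpace ℝ ι}
  {r s B C ε : ℝ} {n : ℕ}

lemma HasCubeGrowth.bumpMean_le (hn : n ≠ 0) (hf : Continuous f) (hf0 : ∀ y, 0 ≤ f y) (hC : 0 ≤ C)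
    (hε : 0 ≤ ε) (hr : 0 < r) (hgrowth : HasCubeGrowth f C (Fintype.card ι - ε) (2 * r))
    (y : EuclideanSpace ℝ ι) : bumpMean n f y r ≤ C * 2 ^ Fintype.card ι * r ^ (-ε) := by
  have hmass := pow_finrank_mul_bumpMean_le_setIntegral hn hf hf0 hr
    (measurableSet_cube _ _) (integrableOn_cube hf _ _)
    (ball_subset_cube (x := WithLp.toLp 2 fun i ↦ y i - r) fun i ↦ (sub_add_cancel (y i) r).symm)
  rw [finrank_euclideanSpace] at hmass
  refine le_of_mul_le_mul_left ?_ (pow_pos hr (Fintype.card ι))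
  calc r ^ Fintype.card ι * bumpMean n f y r
      ≤ C * (2 * r) ^ (Fintype.card ι - ε) := hmass.trans (hgrowth _ _ (by positivity) le_rfl)
    _ = C * (2 ^ (Fintype.card ι - ε) * r ^ (Fintype.card ι - ε)) := by
        rw [Real.mul_rpow zero_le_two hr.le]
    _ ≤ C * (2 ^ Fintype.card ι * (r ^ Fintype.card ι * r ^ (-ε))) := by
        rw [sub_eq_add_neg (Fintype.card ι : ℝ), Real.rpow_add two_pos, Real.rpow_add hr]
        simp only [Real.rpow_natCast]
        have h2 : (2 : ℝ) ^ (-ε) ≤ 1 := Real.rpow_le_one_of_one_le_of_nonpos one_le_two (by simpa)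
        gcongr
        exact mul_le_of_le_one_right (by positivity) h2
    _ = r ^ Fintype.card ι * (C * 2 ^ Fintype.card ι * r ^ (-ε)) := by ring

lemma exists_tile_setIntegral_le (hf : Continuous f) (hn : n ≠ 0) (hr : 0 < r) (hz : z ∈ cube x r)
    (hns : Fintype.card ι * (r / n) ≤ s) (hfB : ∀ y, dist y z ≤ s → f y ≤ B) :
    ∃ p : ι → Fin n, ∫ y in cube (tileCorner x (r / n) p) (r / n), f y ≤
      B * (r / n) ^ Fintype.card ι := by
  have hn0 : (0 : ℝ) < n := by positivity
  have hl : 0 < r / n := div_pos hr hn0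
  rw [← mul_div_cancel₀ r hn0.ne'] at hz
  obtain ⟨p, hp⟩ := exists_mem_tile hl hz
  exact ⟨p, setIntegral_cube_le hf hl.le fun y hy ↦ hfB y ((dist_le_of_mem_cube hy hp).trans hns)⟩

section Subharmonic

variable (hv : ContDiff ℝ 2 v) (hv_lap : ∀ y, 0 ≤ Δ v y)
include hv hv_lap

lemma bumpMean_le_of_hasCubeGrowth_laplacian (hC : 0 ≤ C) (hε : ε ∈ Icc 0 1) (hr : 0 < r)
    (hgrowth : HasCubeGrowth (Δ v) C (Fintype.card ι - ε) (2 * r)) (y : EuclideanSpace ℝ ι) :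
    bumpMean 1 v y r ≤ (∫ q : EuclideanSpace ℝ ι, quadBump 1 q) * v y +
      C * 2 ^ Fintype.card ι * r ^ (2 - ε) := by
  have hderiv (ρ : ℝ) (hρ : ρ ∈ interior (Icc 0 r)) :
      deriv (bumpMean 1 v y) ρ ≤ C * 2 ^ Fintype.card ι * r ^ (1 - ε) := by
    rw [interior_Icc] at hρ
    have hmean := (hgrowth.mono (by linarith [hρ.2])).bumpMean_le two_ne_zero
      (continuous_laplacian hv) hv_lap hC hε.1 hρ.1 y
    rw [(hasDerivAt_bumpMean one_ne_zero hv y ρ).deriv]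
    calc ρ / (2 * ((1 : ℕ) + 1)) * bumpMean (1 + 1) (Δ v) y ρ
        ≤ ρ * (C * 2 ^ Fintype.card ι * ρ ^ (-ε)) := by
          have hρ0 := hρ.1.le
          gcongr
          · exact bumpMean_nonneg hv_lap _ _ _
          · exact div_le_self hρ0 (by norm_num)
      _ = C * 2 ^ Fintype.card ι * ρ ^ (1 - ε) := by
          rw [sub_eq_add_neg, Real.rpow_add hρ.1, Real.rpow_one]
          ring
      _ ≤ C * 2 ^ Fintype.card ι * r ^ (1 - ε) := by
          gcongr
          exacts [hρ.1.le, sub_nonneg.2 hε.2, hρ.2.le]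
  have hgrow := (convex_Icc 0 r).image_sub_le_mul_sub_of_deriv_le
    (fun ρ _ ↦ (hasDerivAt_bumpMean one_ne_zero hv y ρ).continuousAt.continuousWithinAt)
    (fun ρ _ ↦ (hasDerivAt_bumpMean one_ne_zero hv y ρ).differentiableAt.differentiableWithinAt)
    hderiv 0 ⟨le_rfl, hr.le⟩ r ⟨hr.le, le_rfl⟩ hr.le
  have hpow : r ^ (2 - ε) = r ^ (1 - ε) * r := by
    rw [← Real.rpow_add_one hr.ne']
    ring_nf
  rw [bumpMean_zero_right] at hgrow
  rw [hpow]
  linarith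

lemma le_of_dist_le_of_hasCubeGrowth_laplacian (hv0 : ∀ y, 0 ≤ v y) (hC : 0 ≤ C)
    (hε : ε ∈ Icc 0 1) (hr : 0 < r) (hxy : dist x y ≤ r)
    (hgrowth : HasCubeGrowth (Δ v) C (Fintype.card ι - ε) (8 * r)) :
    3 / 4 * ((∫ q : EuclideanSpace ℝ ι, quadBump 1 q) * v x) ≤
      4 ^ Fintype.card ι * ((∫ q : EuclideanSpace ℝ ι, quadBump 1 q) * v y +
        C * 2 ^ Fintype.card ι * (4 * r) ^ (2 - ε)) := by
  have hcompare := bumpMean_le_of_dist_le one_ne_zero hv.continuous hv0 hr hxy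
  rw [finrank_euclideanSpace, pow_one] at hcompare
  calc 3 / 4 * ((∫ q : EuclideanSpace ℝ ι, quadBump 1 q) * v x)
      ≤ 3 / 4 * bumpMean 1 v x r := by
        gcongr
        exact mul_le_bumpMean_of_laplacian_nonneg hv hv_lap one_ne_zero x hr.le
    _ ≤ 4 ^ Fintype.card ι * bumpMean 1 v y (4 * r) := hcompare
    _ ≤ _ := by
        gcongr
        exact bumpMean_le_of_hasCubeGrowth_laplacian hv hv_lap hC hε (by positivity)
          (by convert hgrowth using 1; ring) y

lemma exists_mem_ball_rpow_le_of_rpow_le_setIntegral_laplacian (hv0 : ∀ y, 0 ≤ v y) (hr : 0 < r)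
    {t : Set (EuclideanSpace ℝ ι)} (ht : MeasurableSet t) (htz : t ⊆ closedBall z (r / 4))
    (hmass : C * r ^ (Fintype.card ι - ε) ≤ ∫ y in t, Δ v y) :
    ∃ x ∈ ball z r,
      9 / 256 * (C * r ^ (2 - ε)) ≤ (∫ q : EuclideanSpace ℝ ι, quadBump 1 q) * v x := by
  obtain ⟨x, hxz, hx⟩ := exists_mem_ball_bumpMean_le one_ne_zero hv.continuous z hr
  have hmean := sq_mul_setIntegral_laplacian_le_bumpMean hv hv_lap hv0 hr ht htz
  rw [finrank_euclideanSpace] at hmean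
  have hpow : r ^ Fintype.card ι * r ^ (2 - ε) = r ^ 2 * r ^ (Fintype.card ι - ε) := by
    rw [← Real.rpow_natCast, ← Real.rpow_natCast, ← Real.rpow_add hr, ← Real.rpow_add hr]
    push_cast
    ring_nf
  refine ⟨x, hxz, le_trans (le_of_mul_le_mul_left ?_ (pow_pos hr (Fintype.card ι))) hx⟩
  calc r ^ Fintype.card ι * (9 / 256 * (C * r ^ (2 - ε)))
      = 9 / 256 * (C * (r ^ Fintype.card ι * r ^ (2 - ε))) := by ring
    _ = 9 / 256 * (r ^ 2 * (C * r ^ (Fintype.card ι - ε))) := by rw [hpow]; ring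
    _ ≤ 9 / 256 * (r ^ 2 * ∫ y in t, Δ v y) := by gcongr
    _ ≤ r ^ Fintype.card ι * bumpMean 1 v z r := hmean

end Subharmonic

lemma exists_forall_dist_le_mul_rpow_le_of_le_setIntegral_laplacian (ι : Type*) [Fintype ι]
    {κ : ℝ} (hκ : 0 < κ) :
    ∃ δ > 0, ∃ c > 0, ∀ v : EuclideanSpace ℝ ι → ℝ, ContDiff ℝ 2 v → (∀ y, 0 ≤ Δ v y) →
      (∀ y, 0 ≤ v y) → ∀ C ≥ 0, ∀ ε ∈ Icc (0 : ℝ) 1, ∀ r > 0,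
      HasCubeGrowth (Δ v) C (Fintype.card ι - ε) r → ∀ z t, MeasurableSet t →
      t ⊆ closedBall z (r / 4) → κ * C * r ^ (Fintype.card ι - ε) ≤ ∫ y in t, Δ v y →
      ∃ x ∈ ball z r, ∀ y, dist y x ≤ δ * r → c * (C * r ^ (2 - ε)) ≤ v y := by
  set W := ∫ q : EuclideanSpace ℝ ι, quadBump 1 q
  have hW : 0 < W := integral_quadBump_pos one_ne_zero
  obtain ⟨δ, hδ, hδκ, hδ1⟩ : ∃ δ > 0, 512 * 8 ^ Fintype.card ι * δ ≤ κ ∧ 8 * δ ≤ 1 := by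
    have h8 : (1 : ℝ) ≤ 8 ^ Fintype.card ι := one_le_pow₀ (by norm_num)
    refine ⟨min κ 1 / (512 * 8 ^ Fintype.card ι), by positivity, ?_, ?_⟩
    · exact (mul_div_cancel₀ _ (by positivity)).trans_le (min_le_left κ 1)
    · rw [← le_div_iff₀' (by norm_num), div_le_iff₀ (by positivity)]
      linarith [min_le_right κ 1]
  refine ⟨δ, hδ, κ / (64 * 4 ^ Fintype.card ι * W), by positivity,
    fun v hv hv_lap hv0 C hC ε hε r hr hgrowth z t ht htz hmass ↦ ?_⟩
  obtain ⟨x, hxz, hx⟩ :=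
    exists_mem_ball_rpow_le_of_rpow_le_setIntegral_laplacian hv hv_lap hv0 hr ht htz hmass
  refine ⟨x, hxz, fun y hy ↦ ?_⟩
  have hnear := le_of_dist_le_of_hasCubeGrowth_laplacian hv hv_lap hv0 hC hε
    (mul_pos hδ hr) (dist_comm y x ▸ hy) (hgrowth.mono (by nlinarith))
  have hsmall : 4 ^ Fintype.card ι * (C * 2 ^ Fintype.card ι * (4 * (δ * r)) ^ (2 - ε)) ≤
      κ / 128 * (C * r ^ (2 - ε)) := by
    have h4δ : (4 * δ) ^ (2 - ε) ≤ 4 * δ := by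
      simpa using Real.rpow_le_rpow_of_exponent_ge (by positivity) (by linarith)
        (show 1 ≤ 2 - ε by linarith [hε.2])
    calc 4 ^ Fintype.card ι * (C * 2 ^ Fintype.card ι * (4 * (δ * r)) ^ (2 - ε))
        = (4 * 2) ^ Fintype.card ι * (4 * δ) ^ (2 - ε) * (C * r ^ (2 - ε)) := by
          rw [← mul_assoc 4, Real.mul_rpow (by positivity) hr.le, mul_pow]
          ring
      _ ≤ (4 * 2) ^ Fintype.card ι * (4 * δ) * (C * r ^ (2 - ε)) := by gcongr
      _ ≤ κ / 128 * (C * r ^ (2 - ε)) := by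
          gcongr
          norm_num
          linarith
  have hT : 0 ≤ κ * (C * r ^ (2 - ε)) := by positivity
  rw [div_mul_eq_mul_div, div_le_iff₀ (by positivity)]
  linear_combination 64 * (hsmall + hnear + 3 / 4 * hx) + 3 / 16 * hT

lemma exists_tile_setIntegral_le_half (hf : Continuous f) (hf0 : ∀ y, 0 ≤ f y)
    (hvf : ∀ y, (1 + v y) * f y ≤ B) {c : ℝ} (hc : 0 < c) (hC : 0 < C) (hBC : 2 * B ≤ c * C ^ 2)
    (hε : ε ∈ Icc 0 1) (hr : 1 ≤ r) (hn : n ≠ 0) (hz : z ∈ cube x r)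
    (hns : Fintype.card ι * (r / n) ≤ s) (hv : ∀ y, dist y z ≤ s → c * (C * r ^ (2 - ε)) ≤ v y) :
    ∃ p : ι → Fin n, ∫ y in cube (tileCorner x (r / n) p) (r / n), f y ≤
      C * (r / n) ^ (Fintype.card ι - ε) / 2 := by
  have hr0 : 0 < r := one_pos.trans_le hr
  have hn0 : (0 : ℝ) < n := by positivity
  have hsmall (y) (hy : dist y z ≤ s) : f y ≤ C / 2 * r ^ (-ε) := by
    have hlarge : 0 < c * (C * r ^ (2 - ε)) := by positivity
    refine le_of_mul_le_mul_right ?_ hlarge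
    have hpow : 1 ≤ r ^ (-ε) * r ^ (2 - ε) := by
      rw [← Real.rpow_add hr0]
      exact Real.one_le_rpow hr (by linarith [hε.2])
    calc f y * (c * (C * r ^ (2 - ε))) ≤ f y * (1 + v y) :=
          mul_le_mul_of_nonneg_left (by linarith [hv y hy]) (hf0 y)
      _ ≤ c * C ^ 2 / 2 * 1 := by linarith [hvf y]
      _ ≤ c * C ^ 2 / 2 * (r ^ (-ε) * r ^ (2 - ε)) := by gcongr
      _ = C / 2 * r ^ (-ε) * (c * (C * r ^ (2 - ε))) := by ring
  obtain ⟨p, hp⟩ := exists_tile_setIntegral_le hf hn hr0 hz hns hsmall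
  refine ⟨p, hp.trans ?_⟩
  have hside : r / n ≤ r := div_le_self hr0.le (by exact_mod_cast hn.bot_lt)
  calc C / 2 * r ^ (-ε) * (r / n) ^ Fintype.card ι
      ≤ C / 2 * (r / n) ^ (-ε) * (r / n) ^ Fintype.card ι := by
        have := Real.rpow_le_rpow_of_nonpos (div_pos hr0 hn0) hside (neg_nonpos.2 hε.1)
        gcongr
    _ = C * (r / n) ^ (Fintype.card ι - ε) / 2 := by
        rw [sub_eq_neg_add, Real.rpow_add (div_pos hr0 hn0), Real.rpow_natCast]
        ring

lemma rpow_sub_div_pow_le_div_rpow_sub {a : ℝ} (hr : 0 ≤ r) (ha : 1 ≤ a) (hε : 0 ≤ ε) (d : ℕ) :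
    r ^ (d - ε) / a ^ d ≤ (r / a) ^ (d - ε) := by
  have hpow : a ^ (d - ε) ≤ a ^ d := by
    rw [← Real.rpow_natCast]
    exact Real.rpow_le_rpow_of_exponent_le ha (sub_le_self _ hε)
  rw [Real.div_rpow hr (by positivity)]
  gcongr

lemma exists_tile_setIntegral_laplacian_le_or_forall_le (ι : Type*) [Fintype ι] [Nonempty ι] :
    ∃ n ≥ 2, ∃ δ > 0, ∃ c > 0, ∀ v : EuclideanSpace ℝ ι → ℝ, ContDiff ℝ 2 v →
      (∀ y, 0 ≤ Δ v y) → (∀ y, 0 ≤ v y) → ∀ C ≥ 0, ∀ ε ∈ Icc (0 : ℝ) 1, ∀ r > 0,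
      HasCubeGrowth (Δ v) C (Fintype.card ι - ε) (r / 2) → ∀ x,
      (∃ p : ι → Fin n, ∫ y in cube (tileCorner x (r / n) p) (r / n), Δ v y ≤
        C * (r / n) ^ (Fintype.card ι - ε) / 2) ∨
      ∃ z ∈ cube x r, ∀ y, dist y z ≤ δ * r → c * (C * r ^ (2 - ε)) ≤ v y := by
  set d := Fintype.card ι
  have hd : 1 ≤ d := Fintype.card_pos
  have hdR : (1 : ℝ) ≤ d := mod_cast hd
  set n := 2 * (4 * d)
  have hn : (n : ℝ) = 8 * d := by push_cast [n]; ring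
  obtain ⟨δ, hδ, c, hc, hlarge⟩ :=
    exists_forall_dist_le_mul_rpow_le_of_le_setIntegral_laplacian ι
      (κ := 1 / (2 * (n : ℝ) ^ d)) (by positivity)
  refine ⟨n, by omega, δ / 2, half_pos hδ, c / 4, by positivity,
    fun v hv hv_lap hv0 C hC ε hε r hr hgrowth x ↦ or_iff_not_imp_left.2 fun hdense ↦ ?_⟩
  push Not at hdense
  let z : EuclideanSpace ℝ ι := WithLp.toLp 2 fun i ↦ x i + r / 2
  obtain ⟨p, hp⟩ : ∃ p : ι → Fin n, tileCorner x (r / n) p = z :=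
    exists_tileCorner_eq_center x r (by omega)
  have hmass : 1 / (2 * (n : ℝ) ^ d) * C * (r / 2) ^ (d - ε) ≤ ∫ y in cube z (r / n), Δ v y :=
    calc 1 / (2 * (n : ℝ) ^ d) * C * (r / 2) ^ (d - ε)
        ≤ 1 / (2 * (n : ℝ) ^ d) * C * r ^ (d - ε) := by
          gcongr
          exacts [by linarith [hε.2], half_le_self hr.le]
      _ = C * (r ^ (d - ε) / (n : ℝ) ^ d) / 2 := by ring
      _ ≤ C * (r / n) ^ (d - ε) / 2 := by
          gcongr
          exact rpow_sub_div_pow_le_div_rpow_sub hr.le (by linarith) hε.1 d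
      _ ≤ ∫ y in cube z (r / n), Δ v y := hp ▸ (hdense p).le
  have htile : cube z (r / n) ⊆ closedBall z (r / 2 / 4) := by
    have hdiam : d * (r / n) = r / 2 / 4 := by
      rw [hn]
      field_simp
      norm_num
    exact hdiam ▸ cube_subset_closedBall z (r / n)
  obtain ⟨q, hq, hvq⟩ := hlarge v hv hv_lap hv0 C hC ε hε (r / 2) (by positivity) hgrowth z _
    (measurableSet_cube _ _) htile hmass
  refine ⟨q, ?_, fun y hy ↦ le_trans ?_ (hvq y (hy.trans_eq (by ring)))⟩
  · simpa only [mul_div_cancel₀ r two_ne_zero] using ball_subset_cube (fun _ ↦ rfl) hq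
  · calc c / 4 * (C * r ^ (2 - ε)) = c * (C * (r ^ ((2 : ℕ) - ε) / 2 ^ 2)) := by norm_num; ring
      _ ≤ c * (C * (r / 2) ^ ((2 : ℕ) - ε)) := by
        gcongr
        exact rpow_sub_div_pow_le_div_rpow_sub hr.le one_le_two hε.1 2

lemma eventually_rpow_mul_pow_sub_half_le (hn : n ≠ 0) (d : ℕ) :
    ∀ᶠ ε : ℝ in 𝓝[>] 0, (n : ℝ) ^ ε * ((n : ℝ) ^ d - 1 / 2) ≤ (n : ℝ) ^ d := by
  have hlim : Tendsto (fun ε : ℝ ↦ (n : ℝ) ^ ε * ((n : ℝ) ^ d - 1 / 2)) (𝓝[>] 0)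
      (𝓝 ((n : ℝ) ^ d - 1 / 2)) := by
    refine tendsto_nhdsWithin_of_tendsto_nhds ?_
    simpa using ((Real.continuous_const_rpow (Nat.cast_ne_zero.2 hn)).tendsto (0 : ℝ)).mul_const
      ((n : ℝ) ^ d - 1 / 2)
  exact (hlim.eventually (gt_mem_nhds (by linarith))).mono fun ε ↦ le_of_lt

theorem exists_forall_setIntegral_cube_laplacian_le (ι : Type*) [Fintype ι] [Nonempty ι] :
    ∃ ε > (0 : ℝ), ε ≤ 1 ∧ ∃ c > 0, ∀ v : EuclideanSpace ℝ ι → ℝ, ContDiff ℝ 2 v →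
      (∀ y, 0 ≤ Δ v y) → (∀ y, 0 ≤ v y) → ∀ B, (∀ y, (1 + v y) * Δ v y ≤ B) →
      ∀ C > 0, 2 * B ≤ c * C ^ 2 → ∀ r ≥ 1,
      HasCubeGrowth (Δ v) C (Fintype.card ι - ε) (r / 2) →
      ∀ x, ∫ y in cube x r, Δ v y ≤ C * r ^ (Fintype.card ι - ε) := by
  obtain ⟨m, hm, δ, hδ, c, hc, hdichotomy⟩ := exists_tile_setIntegral_laplacian_le_or_forall_le ι
  obtain ⟨k, hk⟩ := exists_nat_ge (max 2 (Fintype.card ι / δ))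
  have hk2 : 2 ≤ k := by exact_mod_cast (le_max_left _ _).trans hk
  have hkδ : Fintype.card ι ≤ k * δ := (div_le_iff₀ hδ).1 ((le_max_right _ _).trans hk)
  obtain ⟨ε, hεm, hεk, hε0, hε1⟩ := (((eventually_rpow_mul_pow_sub_half_le (n := m)
    (by positivity) (Fintype.card ι)).and ((eventually_rpow_mul_pow_sub_half_le (n := k)
    (by positivity) (Fintype.card ι)).and (Ioc_mem_nhdsGT one_pos)))).exists
  refine ⟨ε, hε0, hε1, c, hc, fun v hv hv_lap hv0 B hvB C hC hBC r hr hgrowth x ↦ ?_⟩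
  have hr0 : 0 < r := one_pos.trans_le hr
  have hle_of_tile {n : ℕ} (hn : 2 ≤ n)
      (hεn : (n : ℝ) ^ ε * ((n : ℝ) ^ Fintype.card ι - 1 / 2) ≤ (n : ℝ) ^ Fintype.card ι)
      (p : ι → Fin n) (hp : ∫ y in cube (tileCorner x (r / n) p) (r / n), Δ v y ≤
        C * (r / n) ^ (Fintype.card ι - ε) / 2) :
      ∫ y in cube x r, Δ v y ≤ C * r ^ (Fintype.card ι - ε) := by
    have hn' : (2 : ℝ) ≤ n := mod_cast hn
    exact HasCubeGrowth.setIntegral_le_of_tile_le (continuous_laplacian hv) hv_lap (by omega) hC.le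
      hr0 (hgrowth.mono (by gcongr)) hεn x p hp
  rcases hdichotomy v hv hv_lap hv0 C hC.le ε ⟨hε0.le, hε1⟩ r hr0 hgrowth x with
    ⟨p, hp⟩ | ⟨z, hz, hvz⟩
  · exact hle_of_tile hm hεm p hp
  · have hside : Fintype.card ι * (r / k) ≤ δ * r := by
      rw [mul_div_assoc', div_le_iff₀ (by positivity)]
      nlinarith
    obtain ⟨p, hp⟩ := exists_tile_setIntegral_le_half (continuous_laplacian hv) hv_lap hvB hc hC hBC
      ⟨hε0.le, hε1⟩ hr (by omega) hz hside hvz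
    exact hle_of_tile hk2 hεk p hp

end GrowthStep

section AreaGrowth

theorem exists_setIntegral_cube_laplacian_le (ι : Type*) [Fintype ι] [Nonempty ι] :
    ∃ ε > (0 : ℝ), ∀ B, ∃ C > 0, ∀ v : EuclideanSpace ℝ ι → ℝ, ContDiff ℝ 2 v →
      (∀ y, 0 ≤ Δ v y) → (∀ y, 0 ≤ v y) → (∀ y, (1 + v y) * Δ v y ≤ B) →
      ∀ x r, 0 < r → ∫ y in cube x r, Δ v y ≤ C * r ^ (Fintype.card ι - ε) := by
  obtain ⟨ε, hε0, -, c, hc, hstep⟩ := exists_forall_setIntegral_cube_laplacian_le ι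
  refine ⟨ε, hε0, fun B ↦ ?_⟩
  obtain ⟨C, hC, hBC, hBcC⟩ : ∃ C > 0, B ≤ C ∧ 2 * B ≤ c * C ^ 2 :=
    ((eventually_gt_atTop 0).and ((eventually_ge_atTop B).and
      (((tendsto_pow_atTop two_ne_zero).const_mul_atTop hc).eventually_ge_atTop (2 * B)))).exists
  refine ⟨C, hC, fun v hv hv_lap hv0 hvB x r hr ↦ ?_⟩
  have hlapC (y) : Δ v y ≤ C := by nlinarith [hv0 y, hv_lap y, hvB y]
  have hdyadic (k : ℕ) : HasCubeGrowth (Δ v) C (Fintype.card ι - ε) (2 ^ k) := by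
    induction k with
    | zero =>
      rw [pow_zero]
      exact hasCubeGrowth_one (continuous_laplacian hv) hlapC hC.le hε0.le
    | succ k ih =>
      intro x ρ hρ0 hρ
      rcases le_total ρ 1 with hρ1 | hρ1
      · exact ih x ρ hρ0 (hρ1.trans (one_le_pow₀ one_le_two))
      · exact hstep v hv hv_lap hv0 B hvB C hC hBcC ρ hρ1
          (ih.mono (by rw [pow_succ] at hρ; linarith)) x
  obtain ⟨k, hk⟩ := pow_unbounded_of_one_lt r one_lt_two
  exact hdyadic k x r hr hk.le

lemma one_add_sub_mul_exp_le {K Lam M t : ℝ} (hK0 : 0 ≤ K) (hK : K ≤ Lam) (ht : t ≤ M) :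
    (1 + (M - t)) * (K * Real.exp (2 * t)) ≤ Lam * Real.exp (2 * M) :=
  calc (1 + (M - t)) * (K * Real.exp (2 * t))
      ≤ Real.exp (2 * (M - t)) * (K * Real.exp (2 * t)) := by
        gcongr
        linarith [Real.add_one_le_exp (2 * (M - t))]
    _ = K * Real.exp (2 * M) := by
        rw [mul_left_comm, ← Real.exp_add]
        ring_nf
    _ ≤ Lam * Real.exp (2 * M) := by gcongr

theorem stmt14_general (ι : Type*) [Fintype ι] [Nonempty ι] :
    ∃ ε > (0 : ℝ), ∀ M lam Lam : ℝ, 0 < lam → ∃ C > 0, ∀ K u : EuclideanSpace ℝ ι → ℝ,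
      (∀ x, lam ≤ K x ∧ K x ≤ Lam) → ContDiff ℝ 2 u → (∀ x, u x ≤ M) →
      (∀ x, Δ u x + K x * Real.exp (2 * u x) = 0) →
      ∀ x R, 0 < R → ∫ y in ball x R, Real.exp (2 * u y) ≤ C * R ^ (Fintype.card ι - ε) := by
  obtain ⟨ε, hε, hcube⟩ := exists_setIntegral_cube_laplacian_le ι
  refine ⟨ε, hε, fun M lam Lam hlam ↦ ?_⟩
  obtain ⟨C, hC, hgrowth⟩ := hcube (Lam * Real.exp (2 * M))
  refine ⟨C * 2 ^ (Fintype.card ι - ε) / lam, by positivity,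
    fun K u hK hu huM heq x R hR ↦ ?_⟩
  have hv : ContDiff ℝ 2 fun y ↦ M - u y := contDiff_const.sub hu
  have hlap (y) : Δ (fun y ↦ M - u y) y = K y * Real.exp (2 * u y) := by
    have hsub := contDiffAt_const (c := M).laplacian_sub (hu.contDiffAt (x := y))
    rw [InnerProductSpace.laplacian_const, Pi.zero_apply, zero_sub] at hsub
    exact hsub.trans (by linarith [heq y])
  have hlap_lower (y) : lam * Real.exp (2 * u y) ≤ Δ (fun y ↦ M - u y) y := by
    rw [hlap]
    exact mul_le_mul_of_nonneg_right (hK y).1 (Real.exp_nonneg _)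
  have hlap_upper (y) : (1 + (M - u y)) * Δ (fun y ↦ M - u y) y ≤ Lam * Real.exp (2 * M) := by
    rw [hlap]
    exact one_add_sub_mul_exp_le (hlam.le.trans (hK y).1) (hK y).2 (huM y)
  set z : EuclideanSpace ℝ ι := WithLp.toLp 2 fun i ↦ x i - R
  have hball : ball x R ⊆ cube z (2 * R) := ball_subset_cube fun i ↦ (sub_add_cancel (x i) R).symm
  have hint := integrableOn_cube (f := fun y ↦ lam * Real.exp (2 * u y))
    (by have := hu.continuous; fun_prop) z (2 * R)
  rw [div_mul_eq_mul_div, le_div_iff₀' hlam, ← integral_const_mul]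
  calc ∫ y in ball x R, lam * Real.exp (2 * u y)
      ≤ ∫ y in cube z (2 * R), lam * Real.exp (2 * u y) :=
        setIntegral_mono_set hint (.of_forall fun y ↦ by positivity) hball.eventuallyLE
    _ ≤ ∫ y in cube z (2 * R), Δ (fun y ↦ M - u y) y :=
        setIntegral_mono hint (integrableOn_cube (continuous_laplacian hv) z (2 * R)) hlap_lower
    _ ≤ C * (2 * R) ^ (Fintype.card ι - ε) :=
        hgrowth _ hv (fun y ↦ le_trans (by positivity) (hlap_lower y))
          (fun y ↦ sub_nonneg.2 (huM y)) hlap_upper z _ (by positivity)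
    _ = C * 2 ^ (Fintype.card ι - ε) * R ^ (Fintype.card ι - ε) := by
        rw [Real.mul_rpow zero_le_two hR.le, mul_assoc]

lemma lap_eq_laplacian {f : EuclideanSpace ℝ (Fin 2) → ℝ} (hf : ContDiff ℝ 2 f) : lap f = Δ f := by
  ext x
  simp [lap, laplacian_eq_sum_fderiv_fderiv_apply hf (EuclideanSpace.basisFun (Fin 2) ℝ)]

end AreaGrowth

theorem stmt14 (M lam Lam : ℝ) (hlam : 0 < lam) (hLam : lam ≤ Lam) :
    ∃ ε > (0 : ℝ), ∃ C > (0 : ℝ),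
      ∀ (K : EuclideanSpace ℝ (Fin 2) → ℝ) (u : EuclideanSpace ℝ (Fin 2) → ℝ),
        Measurable K → (∀ x, lam ≤ K x ∧ K x ≤ Lam) →
        ContDiff ℝ 2 u → (∀ x, u x ≤ M) →
        (∀ x, lap u x + K x * Real.exp (2 * u x) = 0) →
        ∀ R : ℝ, 1 ≤ R →
          (∫ x in Metric.ball (0 : EuclideanSpace ℝ (Fin 2)) R, Real.exp (2 * u x)) ≤
            C * R ^ (2 - ε) := by
  obtain ⟨ε, hε, hgrowth⟩ := stmt14_general (Fin 2)
  obtain ⟨C, hC, hball⟩ := hgrowth M lam Lam hlam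
  refine ⟨ε, hε, C, hC, fun K u _ hK hu huM heq R hR ↦ ?_⟩
  simpa using hball K u hK hu huM (lap_eq_laplacian hu ▸ heq) 0 R (one_pos.trans_le hR)
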